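/- arXiv:2208.13500 — 2 statements merged into one kernel-verified Lean document; each statement's English description precedes it below -/
import Mathlib

section
/- Let (H, x, Y) be an sl2-triple in a finite-dimensional Lie algebra g over a field k of characteristic zero. Then for every integer m ≥ 2, the operator ad(x) maps g_{m-2} onto g_m: for every z ∈ g_m there exists w ∈ g_{m-2} with ⁅x, w⁆ = z. -/
/-- The `i`-eigenspace of `ad H` on a Lie algebra `g`:
`g_i = {z ∈ g | ⁅H, z⁆ = (i : k) • z}`. -/
def gwt (k : Type*) [Field k] {g : Type*} [LieRing g] [LieAlgebra k g]
    (H : g) (i : ℤ) : Submodule k g where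
  carrier := {z | ⁅H, z⁆ = (i : k) • z}
  add_mem' := by
    intro a b ha hb
    simp only [Set.mem_setOf_eq] at *
    rw [lie_add, ha, hb, smul_add]
  zero_mem' := by simp
  smul_mem' := by
    intro c a ha
    simp only [Set.mem_setOf_eq] at *
    rw [lie_smul, ha]
    exact smul_comm c ((i : k)) a

/-!
Write `T = e f` for the operator on the `μ`-eigenspace of `h` and `cₙ = (n + 1)(μ + n)`. The
commutation rule `eⁿ⁺¹ f = f eⁿ⁺¹ + cₙ eⁿ` on that eigenspace shows that `T - cₙ` maps the kernel of
`eⁿ⁺¹` into the kernel of `eⁿ`. So if `eᴺ z = 0`, then `z` is killed by the product of the `T - cₙ`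
over `n < N`; as no `cₙ` vanishes, `z` lies in the range of `T`, hence in that of `e`. In finite
dimension `eᴺ z = 0` for some `N`, because the vectors `eⁿ z` have distinct eigenvalues under `h`.
-/

open LieModule Module.End

section CommRing

variable {R L M : Type*} [CommRing R] [LieRing L] [LieAlgebra R L]
  [AddCommGroup M] [Module R M] [LieRingModule L M] [LieModule R L M]
  {h e f : L} {c μ : R} {z : M}

theorem lie_mem_eigenspace_add (he : ⁅h, e⁆ = c • e) (hz : z ∈ eigenspace (toEnd R L M h) μ) :
    ⁅e, z⁆ ∈ eigenspace (toEnd R L M h) (μ + c) := by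
  rw [mem_eigenspace_iff, toEnd_apply_apply] at hz ⊢
  rw [leibniz_lie, he, hz, smul_lie, lie_smul, add_comm, add_smul]

theorem toEnd_pow_mem_eigenspace_add (he : ⁅h, e⁆ = c • e)
    (hz : z ∈ eigenspace (toEnd R L M h) μ) (n : ℕ) :
    (toEnd R L M e ^ n) z ∈ eigenspace (toEnd R L M h) (μ + n * c) := by
  induction n with
  | zero => simpa using hz
  | succ n ih =>
    have hmem := lie_mem_eigenspace_add he ih
    rwa [add_assoc, ← add_one_mul, ← Nat.cast_succ, ← toEnd_apply_apply R, ← mul_apply,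
      ← pow_succ'] at hmem

theorem exists_toEnd_pow_apply_eq_zero [IsDomain R] [CharZero R] [Module.IsTorsionFree R M]
    [Module.Finite R M] (hc : c ≠ 0) (he : ⁅h, e⁆ = c • e)
    (hz : z ∈ eigenspace (toEnd R L M h) μ) : ∃ n : ℕ, (toEnd R L M e ^ n) z = 0 := by
  by_contra! hne
  have hinj : Function.Injective fun n : ℕ ↦ μ + n * c := fun a b hab ↦ by simpa [hc] using hab
  have heig (n : ℕ) : (toEnd R L M h).HasEigenvalue (μ + n * c) :=
    hasEigenvalue_of_hasEigenvector ⟨toEnd_pow_mem_eigenspace_add he hz n, hne n⟩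
  exact Set.infinite_range_of_injective hinj
    ((finite_hasEigenvalue (toEnd R L M h)).subset (Set.range_subset_iff.2 heig))

theorem toEnd_pow_succ_apply_lie (he : ⁅h, e⁆ = (2 : R) • e) (hef : ⁅e, f⁆ = h)
    (hz : z ∈ eigenspace (toEnd R L M h) μ) (n : ℕ) :
    (toEnd R L M e ^ (n + 1)) ⁅f, z⁆ =
      ⁅f, (toEnd R L M e ^ (n + 1)) z⁆ + ((n + 1) * (μ + n)) • (toEnd R L M e ^ n) z := by
  have lie_e_lie_f (v : M) : ⁅e, ⁅f, v⁆⁆ = ⁅f, ⁅e, v⁆⁆ + ⁅h, v⁆ := by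
    rw [leibniz_lie, hef, add_comm]
  have lie_e_pow (n : ℕ) (v : M) :
      ⁅e, (toEnd R L M e ^ n) v⁆ = (toEnd R L M e ^ (n + 1)) v := by
    rw [pow_succ', mul_apply, toEnd_apply_apply]
  have lie_h_pow (n : ℕ) :
      ⁅h, (toEnd R L M e ^ n) z⁆ = (μ + n * 2) • (toEnd R L M e ^ n) z :=
    mem_eigenspace_iff.1 (toEnd_pow_mem_eigenspace_add he hz n)
  induction n with
  | zero => simpa [lie_e_lie_f] using lie_h_pow 0
  | succ n ih =>
    rw [← lie_e_pow, ih, lie_add, lie_e_lie_f, lie_smul, lie_e_pow, lie_e_pow, lie_h_pow]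
    push_cast
    module

theorem toEnd_pow_apply_lie_lie_sub_smul_eq_zero (he : ⁅h, e⁆ = (2 : R) • e) (hef : ⁅e, f⁆ = h)
    (hz : z ∈ eigenspace (toEnd R L M h) μ) {n : ℕ} (hn : (toEnd R L M e ^ (n + 1)) z = 0) :
    (toEnd R L M e ^ n) (⁅e, ⁅f, z⁆⁆ - ((n + 1) * (μ + n)) • z) = 0 := by
  have hcomm := toEnd_pow_succ_apply_lie he hef hz n
  rw [hn, lie_zero, zero_add, pow_succ, mul_apply, toEnd_apply_apply] at hcomm
  rw [map_sub, map_smul, hcomm, sub_self]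

end CommRing

theorem stmt1_general {k L M : Type*} [Field k] [CharZero k] [LieRing L] [LieAlgebra k L]
    [AddCommGroup M] [Module k M] [LieRingModule L M] [LieModule k L M] {h e f : L}
    (he : ⁅h, e⁆ = (2 : k) • e) (hf : ⁅h, f⁆ = (-2 : k) • f) (hef : ⁅e, f⁆ = h)
    {μ : k} (hμ : ∀ n : ℕ, μ + n ≠ 0) {z : M} (hz : z ∈ eigenspace (toEnd k L M h) μ)
    (hnil : ∃ n : ℕ, (toEnd k L M e ^ n) z = 0) :
    ∃ w ∈ eigenspace (toEnd k L M h) (μ - 2), ⁅e, w⁆ = z := by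
  obtain ⟨n, hn⟩ := hnil
  induction n generalizing z with
  | zero => exact ⟨0, zero_mem _, by simpa using hn.symm⟩
  | succ n ih =>
    let c : k := (n + 1) * (μ + n)
    have hc : c ≠ 0 := mul_ne_zero n.cast_add_one_ne_zero (hμ n)
    have hfz : ⁅f, z⁆ ∈ eigenspace (toEnd k L M h) (μ - 2) := by
      simpa only [sub_eq_add_neg] using lie_mem_eigenspace_add hf hz
    have hefz : ⁅e, ⁅f, z⁆⁆ ∈ eigenspace (toEnd k L M h) μ := by
      simpa only [sub_add_cancel] using lie_mem_eigenspace_add he hfz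
    obtain ⟨w, hw, hew⟩ : ∃ w ∈ eigenspace (toEnd k L M h) (μ - 2), ⁅e, w⁆ = ⁅e, ⁅f, z⁆⁆ - c • z :=
      ih (sub_mem hefz (Submodule.smul_mem _ c hz))
        (toEnd_pow_apply_lie_lie_sub_smul_eq_zero he hef hz hn)
    refine ⟨c⁻¹ • (⁅f, z⁆ - w), Submodule.smul_mem _ _ (sub_mem hfz hw), ?_⟩
    rw [lie_smul, lie_sub, hew, sub_sub_cancel, inv_smul_smul₀ hc]

theorem gwt_eq_eigenspace (k : Type*) [Field k] {g : Type*} [LieRing g] [LieAlgebra k g]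
    (H : g) (i : ℤ) : gwt k H i = eigenspace (toEnd k g g H) (i : k) := by
  ext z
  rw [mem_eigenspace_iff]
  rfl

/-- For every `m ≥ 2`, `ad x` maps `g_{m-2}` onto `g_m`. -/
theorem stmt1 {k : Type*} [Field k] [CharZero k]
    {g : Type*} [LieRing g] [LieAlgebra k g] [FiniteDimensional k g]
    (H x Y : g) (hHx : ⁅H, x⁆ = (2 : k) • x) (hHY : ⁅H, Y⁆ = (-2 : k) • Y)
    (hxY : ⁅x, Y⁆ = H) :
    ∀ m : ℤ, 2 ≤ m → ∀ z ∈ gwt k H m, ∃ w ∈ gwt k H (m - 2), ⁅x, w⁆ = z := by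
  intro m hm z hz
  have hm' (n : ℕ) : (m : k) + n ≠ 0 := by norm_cast; lia
  rw [gwt_eq_eigenspace] at hz ⊢
  push_cast
  exact stmt1_general hHx hHY hxY hm' hz (exists_toEnd_pow_apply_eq_zero two_ne_zero hHx hz)
end

section
/- Let (H, x, Y) be an sl2-triple in a finite-dimensional Lie algebra g over a field k of characteristic zero. Then the centralizer of x in g is contained in the Jacobson–Morozov parabolic subalgebra: every z ∈ g with ⁅x, z⁆ = 0 lies in the supremum of the subspaces g_i over all integers i ≥ 0. -/
/-- The sum `⨆ {i ≥ n} g_i` of the eigenspaces of `ad H` with eigenvalue at least `n`. -/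
def vsp (k : Type*) [Field k] {g : Type*} [LieRing g] [LieAlgebra k g]
    (H : g) (n : ℤ) : Submodule k g :=
  ⨆ i : ℤ, ⨆ _ : n ≤ i, gwt k H i

/-!
Let `⁅x, z⁆ = 0`. Moving the factors `ad x` to the right in `(ad x)ⁿ (ad Y)ⁿ z` one at a time gives
`(ad x)ⁿ (ad Y)ⁿ z = n! • T (T - 1) ⋯ (T - n + 1) z` with `T = ad H`. The nonzero powers of `ad Y`
are eigenvectors of `⁅T, ·⁆` with distinct eigenvalues, so `ad Y` is nilpotent and the left side
vanishes for large `n`. Thus `z` is killed by a polynomial in `T` with simple roots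
`0, 1, …, n - 1`, and is therefore a sum of eigenvectors of `T` with these eigenvalues.
-/

open Module Polynomial

section Algebra

attribute [local instance] LieRing.ofAssociativeRing

variable {R A : Type*} [CommRing R] [Ring A] [Algebra R A]

theorem lie_pow_eq_smul_of_lie_eq_smul {a b : A} {c : R} (hab : ⁅a, b⁆ = c • b) (n : ℕ) :
    ⁅a, b ^ n⁆ = (n * c) • b ^ n := by
  induction n with
  | zero => simp [Ring.lie_def]
  | succ n ih =>
    calc ⁅a, b ^ (n + 1)⁆ = ⁅a, b ^ n⁆ * b + b ^ n * ⁅a, b⁆ := by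
          simp only [Ring.lie_def]; noncomm_ring
      _ = (n * c) • b ^ (n + 1) + c • b ^ (n + 1) := by
          rw [ih, hab, smul_mul_assoc, mul_smul_comm, ← pow_succ]
      _ = ((n + 1 : ℕ) * c) • b ^ (n + 1) := by
          rw [← add_smul, Nat.cast_succ, add_one_mul]

theorem isNilpotent_of_lie_eq_smul [IsDomain R] [CharZero R] [IsTorsionFree R A]
    [IsNoetherian R A] {a b : A} {c : R} (hc : c ≠ 0) (hab : ⁅a, b⁆ = c • b) :
    IsNilpotent b := by
  by_contra hb
  have eigenvector_pow (n : ℕ) : (LieAlgebra.ad R A a).HasEigenvector (n * c) (b ^ n) :=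
    ⟨End.mem_eigenspace_iff.2 (lie_pow_eq_smul_of_lie_eq_smul hab n), fun h => hb ⟨n, h⟩⟩
  have eigenvalue_injective : Function.Injective fun n : ℕ => (n : R) * c :=
    (mul_left_injective₀ hc).comp Nat.cast_injective
  have := (End.eigenvectors_linearIndependent' _ _ eigenvalue_injective _ eigenvector_pow).finite
  exact not_finite ℕ

theorem lie_pow_succ_of_lie_eq {e f h : A} (hef : ⁅e, f⁆ = h) (hhf : ⁅h, f⁆ = (-2 : R) • f)
    (n : ℕ) : ⁅e, f ^ (n + 1)⁆ = (n + 1) • (f ^ n * (h - n)) := by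
  have h_mul_f : h * f = f * h - 2 • f := by
    rw [← sub_add_cancel (h * f) (f * h), ← Ring.lie_def, hhf]
    module
  induction n with
  | zero => simp [hef]
  | succ n ih =>
    calc ⁅e, f ^ (n + 1 + 1)⁆ = ⁅e, f ^ (n + 1)⁆ * f + f ^ (n + 1) * ⁅e, f⁆ := by
          simp only [Ring.lie_def]; noncomm_ring
      _ = (n + 1) • (f ^ n * (h * f - n * f)) + f ^ (n + 1) * h := by
          rw [ih, hef, smul_mul_assoc, mul_assoc, sub_mul]
      _ = (n + 1) • (f ^ (n + 1) * (h - n - 2)) + f ^ (n + 1) * h := by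
          rw [h_mul_f, (Nat.cast_commute n f).eq]; noncomm_ring
      _ = (n + 1 + 1) • (f ^ (n + 1) * (h - (n + 1 : ℕ))) := by
          simp only [mul_sub, ← nsmul_eq_mul', Nat.cast_succ, mul_add, mul_one, mul_two]
          module

end Algebra

theorem descPochhammer_eq_prod_range (R : Type*) [CommRing R] (n : ℕ) :
    descPochhammer R n = ∏ i ∈ Finset.range n, (X - C (i : R)) := by
  induction n with
  | zero => simp
  | succ n ih => rw [descPochhammer_succ_right, ih, Finset.prod_range_succ, C_eq_natCast]

theorem ker_aeval_prod_X_sub_C {k M ι : Type*} [Field k] [AddCommGroup M] [Module k M]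
    (T : End k M) {μ : ι → k} (hμ : Function.Injective μ) (s : Finset ι) :
    LinearMap.ker (aeval T (∏ i ∈ s, (X - C (μ i)))) = ⨆ i ∈ s, T.eigenspace (μ i) := by
  classical
  induction s using Finset.induction_on with
  | empty => simp [End.one_eq_id]
  | insert j s hj ih =>
    have coprime : IsCoprime (X - C (μ j)) (∏ i ∈ s, (X - C (μ i))) :=
      IsCoprime.prod_right fun i hi =>
        pairwise_coprime_X_sub_C hμ (ne_of_mem_of_not_mem hi hj).symm
    rw [Finset.prod_insert hj, ← sup_ker_aeval_eq_ker_aeval_mul_of_coprime T coprime, ih,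
      Finset.iSup_insert, End.eigenspace_def, map_sub, aeval_X, aeval_C,
      Algebra.algebraMap_eq_smul_one]

theorem pow_apply_pow_apply_of_apply_eq_zero {R M : Type*} [CommRing R] [AddCommGroup M]
    [Module R M] {E F T : End R M} {c : R} (hTE : ⁅T, E⁆ = c • E) (hTF : ⁅T, F⁆ = (-2 : R) • F)
    (hEF : ⁅E, F⁆ = T) (n : ℕ) {m : M} (hm : E m = 0) :
    (E ^ n) ((F ^ n) m) = n.factorial • aeval T (descPochhammer R n) m := by
  induction n generalizing m with
  | zero => simp
  | succ n ih =>
    have E_shift : E ((T - (n : End R M)) m) = 0 := by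
      have E_T : E (T m) = 0 := by
        have := LinearMap.congr_fun hTE m
        simpa only [Ring.lie_def, LinearMap.sub_apply, LinearMap.smul_apply, End.mul_apply, hm,
          map_zero, zero_sub, smul_zero, neg_eq_zero] using this
      rw [LinearMap.sub_apply, End.natCast_apply, map_sub, map_nsmul, E_T, hm, smul_zero, sub_zero]
    have E_pow : E ((F ^ (n + 1)) m) = (n + 1) • (F ^ n) ((T - (n : End R M)) m) := by
      have := LinearMap.congr_fun (lie_pow_succ_of_lie_eq hEF hTF n) m
      rwa [Ring.lie_def, LinearMap.sub_apply, End.mul_apply, End.mul_apply, hm, map_zero, sub_zero]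
        at this
    calc (E ^ (n + 1)) ((F ^ (n + 1)) m)
        = (n + 1) • (E ^ n) ((F ^ n) ((T - (n : End R M)) m)) := by
          rw [pow_succ E, End.mul_apply, E_pow, map_nsmul]
      _ = (n + 1) • n.factorial • aeval T (descPochhammer R n) ((T - (n : End R M)) m) := by
          rw [ih E_shift]
      _ = (n + 1).factorial • aeval T (descPochhammer R (n + 1)) m := by
          rw [smul_smul, ← Nat.factorial_succ, descPochhammer_succ_right, map_mul,
            End.mul_apply, map_sub, aeval_X, map_natCast]

section CharZero

attribute [local instance] LieRing.ofAssociativeRing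

variable {k M : Type*} [Field k] [CharZero k] [AddCommGroup M] [Module k M]

theorem ker_aeval_descPochhammer (T : End k M) (n : ℕ) :
    LinearMap.ker (aeval T (descPochhammer k n)) =
      ⨆ i ∈ Finset.range n, T.eigenspace (i : k) := by
  rw [descPochhammer_eq_prod_range, ker_aeval_prod_X_sub_C T Nat.cast_injective]

theorem mem_iSup_eigenspace_of_pow_apply_eq_zero {E F T : End k M} {c : k}
    (hTE : ⁅T, E⁆ = c • E) (hTF : ⁅T, F⁆ = (-2 : k) • F) (hEF : ⁅E, F⁆ = T) {n : ℕ} {m : M}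
    (hE : E m = 0) (hF : (F ^ n) m = 0) :
    m ∈ ⨆ i ∈ Finset.range n, T.eigenspace (i : k) := by
  rw [← ker_aeval_descPochhammer, LinearMap.mem_ker]
  have := pow_apply_pow_apply_of_apply_eq_zero hTE hTF hEF n hE
  rw [hF, map_zero, eq_comm, ← Nat.cast_smul_eq_nsmul k] at this
  exact (smul_eq_zero.1 this).resolve_left (Nat.cast_ne_zero.2 n.factorial_ne_zero)

theorem stmt12_general {L : Type*} [LieRing L] [LieAlgebra k L] [LieRingModule L M]
    [LieModule k L M] [FiniteDimensional k M] {h e f : L} (hhe : ⁅h, e⁆ = (2 : k) • e)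
    (hhf : ⁅h, f⁆ = (-2 : k) • f) (hef : ⁅e, f⁆ = h) {m : M} (hm : ⁅e, m⁆ = 0) :
    m ∈ ⨆ i : ℕ, (LieModule.toEnd k L M h).eigenspace (i : k) := by
  set ρ := LieModule.toEnd k L M
  have hTE : ⁅ρ h, ρ e⁆ = (2 : k) • ρ e := by rw [← LieHom.map_lie, hhe, map_smul]
  have hTF : ⁅ρ h, ρ f⁆ = (-2 : k) • ρ f := by rw [← LieHom.map_lie, hhf, map_smul]
  have hEF : ⁅ρ e, ρ f⁆ = ρ h := by rw [← LieHom.map_lie, hef]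
  obtain ⟨n, hn⟩ := isNilpotent_of_lie_eq_smul (neg_ne_zero.2 two_ne_zero) hTF
  have hF : (ρ f ^ n) m = 0 := by rw [hn, LinearMap.zero_apply]
  exact (iSup₂_le_iSup (· ∈ Finset.range n) fun i : ℕ => (ρ h).eigenspace (i : k))
    (mem_iSup_eigenspace_of_pow_apply_eq_zero hTE hTF hEF hm hF)

end CharZero

section Grading

variable (k : Type*) [Field k] {g : Type*} [LieRing g] [LieAlgebra k g] (H : g)

theorem gwt_eq_eigenspace_ad (i : ℤ) : gwt k H i = (LieAlgebra.ad k g H).eigenspace (i : k) := by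
  ext z
  rw [End.mem_eigenspace_iff]
  rfl

theorem iSup_eigenspace_ad_le_vsp_zero :
    ⨆ i : ℕ, (LieAlgebra.ad k g H).eigenspace (i : k) ≤ vsp k H 0 :=
  iSup_le fun i => by
    rw [← Int.cast_natCast, ← gwt_eq_eigenspace_ad]
    exact le_iSup₂_of_le (i : ℤ) i.cast_nonneg le_rfl

end Grading

/-- The centralizer of `x` in `g` is contained in the Jacobson–Morozov
parabolic subalgebra `𝔭 = ⨆ {i ≥ 0} g_i`. -/
theorem stmt12 {k : Type*} [Field k] [CharZero k]
    {g : Type*} [LieRing g] [LieAlgebra k g] [FiniteDimensional k g]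
    (H x Y : g) (hHx : ⁅H, x⁆ = (2 : k) • x) (hHY : ⁅H, Y⁆ = (-2 : k) • Y)
    (hxY : ⁅x, Y⁆ = H) :
    ∀ z : g, ⁅x, z⁆ = 0 → z ∈ vsp k H 0 :=
  fun _ hz => iSup_eigenspace_ad_le_vsp_zero k H (stmt12_general hHx hHY hxY hz)
end
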